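/- Second-moment estimate: Σ_{n≤N} (ω(n) − log log N)² = O(N log log N) for N ≥ 16. -/

import Mathlib

open Finset

/-!
Turán's argument. For pairwise coprime `d ∈ s`, the number of `n ≤ N` divisible by `d` (or by two
of them, `d` and `e`) is `N / d` (or `N / (d * e)`) up to rounding, so the events `d ∣ n` are nearly
independent and the number of `d ∈ s` dividing `n` has mean about `H = ∑ d⁻¹` and variance `O(H)`.
For `s` the primes up to `N` this count is `ω n`, and `H = log log N + O(1)` is Mertens' second
theorem: counting the primes in `n !` gives `∑ log p / p = log n + O(1)`, from which `∑ 1 / p`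
follows by partial summation.
-/

open Real (log)
open scoped Nat

/-! ### Mertens' first theorem -/

lemma log_factorial_eq_sum_primesLE (n : ℕ) :
    log n ! = ∑ p ∈ n.primesLE, (n !).factorization p * log p := by
  rw [Real.log_nat_eq_sum_factorization]
  refine Finsupp.sum_of_support_subset _ (fun p hp ↦ ?_) _ (by simp)
  rw [Nat.support_factorization, Nat.mem_primeFactors] at hp
  exact Nat.mem_primesLE.2 ⟨hp.1.dvd_factorial.1 hp.2.1, hp.1⟩

lemma log_factorial_le_mul_log (n : ℕ) : log n ! ≤ n * log n := by
  rw [← Real.log_pow]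
  exact Real.log_le_log (mod_cast n.factorial_pos) (mod_cast n.factorial_le_pow)

lemma mul_log_sub_le_log_factorial (n : ℕ) : n * log n - n ≤ log n ! := by
  rcases eq_or_ne n 0 with rfl | hn
  · simp
  have hexp : log ((n : ℝ) ^ n / n !) ≤ n :=
    (Real.log_le_iff_le_exp (by positivity)).2 (Real.pow_div_factorial_le_exp n n.cast_nonneg n)
  rw [Real.log_div (by positivity) (by positivity), Real.log_pow] at hexp
  linarith

lemma div_sub_one_le_natCast_div (m d : ℕ) : (m : ℝ) / d - 1 ≤ (m / d : ℕ) := by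
  rw [← Nat.floor_div_eq_div (K := ℝ)]
  exact (Nat.sub_one_lt_floor _).le

lemma div_le_factorization_factorial {p : ℕ} (hp : p.Prime) (n : ℕ) :
    n / p ≤ (n !).factorization p := by
  rw [Nat.factorization_factorial hp (b := Nat.log p n + 2) (by omega)]
  simpa using single_le_sum (f := fun i ↦ n / p ^ i) (fun _ _ ↦ Nat.zero_le _)
    (show 1 ∈ Ico 1 (Nat.log p n + 2) by simp)

lemma sum_primesLE_log_div_le {n : ℕ} (hn : n ≠ 0) :
    ∑ p ∈ n.primesLE, log p / p ≤ log n + log 4 := by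
  refine le_of_mul_le_mul_left ?_ (show (0 : ℝ) < n by positivity)
  calc (n : ℝ) * ∑ p ∈ n.primesLE, log p / p
      ≤ ∑ p ∈ n.primesLE, ((n !).factorization p * log p + log p) := by
        rw [mul_sum]
        refine sum_le_sum fun p hp ↦ ?_
        have hdiv : (n : ℝ) / p - 1 ≤ (n !).factorization p :=
          (div_sub_one_le_natCast_div n p).trans
            (mod_cast div_le_factorization_factorial (Nat.prime_of_mem_primesLE hp) n)
        calc (n : ℝ) * (log p / p) = (n / p - 1) * log p + log p := by ring
          _ ≤ (n !).factorization p * log p + log p := by gcongr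
    _ = log n ! + Chebyshev.theta n := by
        rw [sum_add_distrib, ← log_factorial_eq_sum_primesLE, Chebyshev.theta_eq_sum_primesLE_log]
    _ ≤ n * log n + log 4 * n :=
        add_le_add (log_factorial_le_mul_log n) (Chebyshev.theta_le_log4_mul_x n.cast_nonneg)
    _ = n * (log n + log 4) := by ring

lemma log_div_mul_sub_one_le {x : ℝ} (hx : 2 ≤ x) :
    log x / (x * (x - 1)) ≤ 4 * (x ^ (3 / 2 : ℝ))⁻¹ := by
  have hx₀ : 0 < x := by linarith
  have hlog : log x ≤ 2 * x ^ (1 / 2 : ℝ) := by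
    linarith [Real.log_le_rpow_div hx₀.le (ε := 1 / 2) (by norm_num)]
  have hsq : x ^ (1 / 2 : ℝ) * x ^ (3 / 2 : ℝ) = x ^ 2 := by
    rw [← Real.rpow_add hx₀]
    norm_num
  rw [← div_eq_mul_inv, div_le_div_iff₀ (by nlinarith) (by positivity)]
  calc log x * x ^ (3 / 2 : ℝ) ≤ 2 * x ^ (1 / 2 : ℝ) * x ^ (3 / 2 : ℝ) := by gcongr
    _ = 2 * x ^ 2 := by rw [mul_assoc, hsq]
    _ ≤ 4 * (x * (x - 1)) := by nlinarith

lemma log_div_mul_sub_one_nonneg (n : ℕ) : 0 ≤ log n / (n * (n - 1)) := by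
  rcases n with _ | n
  · simp
  · push_cast
    rw [add_sub_cancel_right]
    exact div_nonneg (mod_cast Real.log_natCast_nonneg (n + 1)) (by positivity)

lemma summable_log_div_mul_sub_one : Summable fun n : ℕ ↦ log n / (n * (n - 1)) := by
  refine Summable.of_nonneg_of_le log_div_mul_sub_one_nonneg (fun n ↦ ?_)
    ((Real.summable_nat_rpow_inv.2 (show (1 : ℝ) < 3 / 2 by norm_num)).mul_left 4)
  rcases lt_or_ge n 2 with hn | hn
  · interval_cases n <;> simp
  · exact log_div_mul_sub_one_le (mod_cast hn)

lemma factorization_factorial_mul_log_le {p : ℕ} (hp : p.Prime) (n : ℕ) :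
    (n !).factorization p * log p ≤ n * (log p / p + log p / (p * (p - 1))) := by
  have hp₀ : (p : ℝ) ≠ 0 := mod_cast hp.ne_zero
  have hp₁ : (p : ℝ) - 1 ≠ 0 := sub_ne_zero.2 (mod_cast hp.ne_one)
  have hlegendre : ((n !).factorization p : ℝ) ≤ n / (p - 1) :=
    calc ((n !).factorization p : ℝ) ≤ (n / (p - 1) : ℕ) :=
          mod_cast Nat.factorization_factorial_le_div_pred hp n
      _ ≤ n / (p - 1) := Nat.cast_div_le.trans_eq (by rw [Nat.cast_pred hp.pos])
  calc (n !).factorization p * log p ≤ n / (p - 1) * log p := by gcongr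
    _ = n * (log p / p + log p / (p * (p - 1))) := by
        field_simp
        ring

lemma log_sub_le_sum_primesLE_log_div {n : ℕ} (hn : n ≠ 0) :
    log n - (1 + ∑' k : ℕ, log k / (k * (k - 1))) ≤ ∑ p ∈ n.primesLE, log p / p := by
  have htail : ∑ p ∈ n.primesLE, log p / (p * (p - 1)) ≤ ∑' k : ℕ, log k / (k * (k - 1)) :=
    summable_log_div_mul_sub_one.sum_le_tsum _ fun k _ ↦ log_div_mul_sub_one_nonneg k
  have hcount : n * (log n - 1) ≤
      n * (∑ p ∈ n.primesLE, log p / p + ∑ p ∈ n.primesLE, log p / (p * (p - 1))) :=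
    calc n * (log n - 1) = n * log n - n := by ring
      _ ≤ log n ! := mul_log_sub_le_log_factorial n
      _ ≤ _ := by
        rw [log_factorial_eq_sum_primesLE, ← sum_add_distrib, mul_sum]
        exact sum_le_sum fun p hp ↦
          factorization_factorial_mul_log_le (Nat.prime_of_mem_primesLE hp) n
  linarith [le_of_mul_le_mul_left hcount (by positivity)]

theorem exists_abs_sum_primesLE_log_div_sub_log_le :
    ∃ C : ℝ, ∀ n : ℕ, n ≠ 0 → |∑ p ∈ n.primesLE, log p / p - log n| ≤ C := by
  refine ⟨max (log 4) (1 + ∑' k : ℕ, log k / (k * (k - 1))), fun n hn ↦ abs_sub_le_iff.2 ⟨?_, ?_⟩⟩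
  · exact le_max_of_le_left (sub_le_iff_le_add'.2 (sum_primesLE_log_div_le hn))
  · exact le_max_of_le_right (sub_le_comm.1 (log_sub_le_sum_primesLE_log_div hn))

/-! ### Mertens' second theorem -/

lemma abs_mul_inv_sub_inv_sub_log_div_le {a x y K : ℝ} (hx : 0 < x) (hxy : x ≤ y)
    (hya : y - K ≤ a) (hax : a ≤ x + K) :
    |a * (x⁻¹ - y⁻¹) - log (y / x)| ≤ K * (x⁻¹ - y⁻¹) := by
  have hy : 0 < y := hx.trans_le hxy
  have hinv : 0 ≤ x⁻¹ - y⁻¹ := sub_nonneg.2 (inv_anti₀ hx hxy)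
  have hlog_le : log (y / x) ≤ y * (x⁻¹ - y⁻¹) := by
    refine (Real.log_le_sub_one_of_pos (by positivity)).trans_eq ?_
    field_simp
  have hle_log : x * (x⁻¹ - y⁻¹) ≤ log (y / x) := by
    refine Eq.trans_le ?_ (Real.one_sub_inv_le_log_of_pos (by positivity))
    field_simp
  rw [abs_sub_le_iff]
  constructor
  · linarith [mul_le_mul_of_nonneg_right hax hinv]
  · linarith [mul_le_mul_of_nonneg_right hya hinv]

/-- The discrete analogue of `∫ du / u = log u`. -/
lemma abs_sum_range_sub_div_sub_log_le {A u : ℕ → ℝ} {K : ℝ} (hpos : ∀ n, 0 < u n)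
    (hmono : Monotone u) (hlower : ∀ n, u (n + 1) - K ≤ A n) (hupper : ∀ n, A n ≤ u n + K)
    (n : ℕ) :
    |∑ k ∈ range n, (A (k + 1) - A k) / u (k + 1) - log (u n / u 0)| ≤ 2 * K / u 0 := by
  have hparts : ∑ k ∈ range n, (A (k + 1) - A k) / u (k + 1) =
      (A n / u n - A 0 / u 0) + ∑ k ∈ range n, A k * ((u k)⁻¹ - (u (k + 1))⁻¹) := by
    rw [← sum_range_sub (fun k ↦ A k / u k), ← sum_add_distrib]
    exact sum_congr rfl fun k _ ↦ by ring
  have hlog : log (u n / u 0) = ∑ k ∈ range n, log (u (k + 1) / u k) := by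
    simp only [Real.log_div (hpos _).ne' (hpos _).ne']
    rw [sum_range_sub fun k ↦ log (u k)]
  have hmain : |∑ k ∈ range n, A k * ((u k)⁻¹ - (u (k + 1))⁻¹) - log (u n / u 0)| ≤
      K * ((u 0)⁻¹ - (u n)⁻¹) := by
    rw [hlog, ← sum_sub_distrib, ← sum_range_sub' (fun k ↦ (u k)⁻¹), mul_sum]
    exact (abs_sum_le_sum_abs _ _).trans <| sum_le_sum fun k _ ↦
      abs_mul_inv_sub_inv_sub_log_div_le (hpos k) (hmono k.le_succ) (hlower k) (hupper k)
  have hboundary (m : ℕ) : |A m / u m - 1| ≤ K * (u m)⁻¹ := by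
    rw [div_sub_one (hpos m).ne', abs_div, abs_of_pos (hpos m), div_eq_mul_inv]
    have := hmono m.le_succ
    have := (hpos m).le
    gcongr
    exact abs_sub_le_iff.2 ⟨by linarith [hupper m], by linarith [hlower m]⟩
  have hconst : 2 * K / u 0 = 2 * (K * (u 0)⁻¹) := by ring
  have hn := abs_le.1 (hboundary n)
  have h₀ := abs_le.1 (hboundary 0)
  have hsum := abs_le.1 hmain
  rw [hparts, hconst, abs_le]
  constructor <;> linarith

lemma sum_primesLE_succ {M : Type*} [AddCommMonoid M] (f : ℕ → M) (n : ℕ) :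
    ∑ p ∈ (n + 1).primesLE, f p =
      ∑ p ∈ n.primesLE, f p + if (n + 1).Prime then f (n + 1) else 0 := by
  simp only [Nat.primesLE_eq_filter_range, sum_filter]
  exact sum_range_succ _ _

lemma sum_primesLE_inv_eq_add_sum_range (n : ℕ) :
    ∑ p ∈ (n + 2).primesLE, (p : ℝ)⁻¹ = 2⁻¹ + ∑ k ∈ range n,
      (∑ p ∈ (k + 1 + 2).primesLE, log p / p - ∑ p ∈ (k + 2).primesLE, log p / p) /
        log (k + 1 + 2 : ℕ) := by
  induction n with
  | zero => simp [sum_primesLE_succ, Nat.prime_two]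
  | succ n ih =>
    have hlog : log (n + 1 + 2 : ℕ) ≠ 0 := (Real.log_pos (by norm_cast; omega)).ne'
    rw [sum_range_succ, ← add_assoc, ← ih, show n + 1 + 2 = n + 2 + 1 by ring,
      sum_primesLE_succ, sum_primesLE_succ fun p ↦ log p / p, add_sub_cancel_left]
    split_ifs
    · rw [div_right_comm, div_self hlog, one_div]
    · rw [zero_div]

lemma log_add_one_le_log_add_inv {x : ℝ} (hx : 0 < x) : log (x + 1) ≤ log x + x⁻¹ := by
  have h := Real.log_le_sub_one_of_pos (show 0 < (x + 1) / x by positivity)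
  rw [Real.log_div (by positivity) hx.ne', add_div, div_self hx.ne', one_div] at h
  linarith

theorem exists_abs_sum_primesLE_inv_sub_log_log_le :
    ∃ C : ℝ, ∀ n : ℕ, 2 ≤ n → |∑ p ∈ n.primesLE, (p : ℝ)⁻¹ - log (log n)| ≤ C := by
  obtain ⟨K, hK⟩ := exists_abs_sum_primesLE_log_div_sub_log_le
  refine ⟨2⁻¹ + |log (log 2)| + 2 * (K + 1) / log 2, fun n hn ↦ ?_⟩
  obtain ⟨m, rfl⟩ := Nat.exists_eq_add_of_le' hn
  have hpos (k : ℕ) : 0 < log (k + 2 : ℕ) := Real.log_pos (by norm_cast; omega)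
  have hmono : Monotone fun k : ℕ ↦ log (k + 2 : ℕ) := fun j k hjk ↦
    Real.log_le_log (by positivity) (mod_cast Nat.add_le_add_right hjk 2)
  have hstep (k : ℕ) : log (k + 1 + 2 : ℕ) ≤ log (k + 2 : ℕ) + 1 := by
    have hlog := log_add_one_le_log_add_inv (show (0 : ℝ) < (k + 2 : ℕ) by positivity)
    have hinv : ((k + 2 : ℕ) : ℝ)⁻¹ ≤ 1 := Nat.cast_inv_le_one _
    rw [add_right_comm, Nat.cast_add_one]
    linarith
  have hA (k : ℕ) := abs_le.1 (hK (k + 2) (by omega))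
  have hsum := abs_sum_range_sub_div_sub_log_le hpos hmono (K := K + 1)
    (A := fun k ↦ ∑ p ∈ (k + 2).primesLE, log p / p) (fun k ↦ by linarith [hA k, hstep k])
    (fun k ↦ by linarith [hA k]) m
  rw [Real.log_div (hpos m).ne' (hpos 0).ne', zero_add, Nat.cast_ofNat, abs_le] at hsum
  rw [sum_primesLE_inv_eq_add_sum_range, abs_le]
  constructor <;> linarith [neg_abs_le (log (log 2)), le_abs_self (log (log 2))]

/-! ### Turán's inequality -/

lemma sum_card_filter_dvd (s : Finset ℕ) (N : ℕ) :
    ∑ n ∈ Icc 1 N, #{d ∈ s | d ∣ n} = ∑ d ∈ s, N / d := by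
  simp only [← Nat.Ioc_filter_dvd_card_eq_div]
  exact sum_card_bipartiteAbove_eq_sum_card_bipartiteBelow fun n d ↦ d ∣ n

lemma sum_sq_card_filter_dvd (s : Finset ℕ) (N : ℕ) :
    ∑ n ∈ Icc 1 N, #{d ∈ s | d ∣ n} ^ 2 = ∑ d ∈ s, ∑ e ∈ s, N / d.lcm e := by
  simp only [← sum_product', ← Nat.Ioc_filter_dvd_card_eq_div, sq, ← card_product,
    ← filter_product, Nat.lcm_dvd_iff]
  exact sum_card_bipartiteAbove_eq_sum_card_bipartiteBelow fun n (x : ℕ × ℕ) ↦ x.1 ∣ n ∧ x.2 ∣ n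

lemma mul_sum_inv_sub_card_le_sum_card_filter_dvd (s : Finset ℕ) (N : ℕ) :
    N * ∑ d ∈ s, (d : ℝ)⁻¹ - #s ≤ ∑ n ∈ Icc 1 N, (#{d ∈ s | d ∣ n} : ℝ) :=
  calc N * ∑ d ∈ s, (d : ℝ)⁻¹ - #s = ∑ d ∈ s, ((N : ℝ) / d - 1) := by
        simp [mul_sum, div_eq_mul_inv]
    _ ≤ ∑ d ∈ s, ((N / d : ℕ) : ℝ) := sum_le_sum fun d _ ↦ div_sub_one_le_natCast_div N d
    _ = ∑ n ∈ Icc 1 N, (#{d ∈ s | d ∣ n} : ℝ) := mod_cast (sum_card_filter_dvd s N).symm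

lemma sum_sq_card_filter_dvd_le {s : Finset ℕ} (hs : (s : Set ℕ).Pairwise Nat.Coprime) (N : ℕ) :
    ∑ n ∈ Icc 1 N, (#{d ∈ s | d ∣ n} : ℝ) ^ 2 ≤
      N * ((∑ d ∈ s, (d : ℝ)⁻¹) ^ 2 + ∑ d ∈ s, (d : ℝ)⁻¹) := by
  have hterm : ∀ d ∈ s, ∀ e ∈ s, ((N / d.lcm e : ℕ) : ℝ) ≤
      N * ((d : ℝ)⁻¹ * (e : ℝ)⁻¹ + if d = e then (d : ℝ)⁻¹ else 0) := by
    intro d hd e he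
    refine Nat.cast_div_le.trans ?_
    rw [div_eq_mul_inv]
    gcongr
    split_ifs with hde
    · subst hde
      rw [Nat.lcm_self]
      exact le_add_of_nonneg_left (by positivity)
    · rw [(hs hd he hde).lcm_eq_mul, Nat.cast_mul, mul_inv, add_zero]
  calc ∑ n ∈ Icc 1 N, (#{d ∈ s | d ∣ n} : ℝ) ^ 2
      = ∑ d ∈ s, ∑ e ∈ s, ((N / d.lcm e : ℕ) : ℝ) := mod_cast sum_sq_card_filter_dvd s N
    _ ≤ ∑ d ∈ s, ∑ e ∈ s, N * ((d : ℝ)⁻¹ * (e : ℝ)⁻¹ + if d = e then (d : ℝ)⁻¹ else 0) :=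
        sum_le_sum fun d hd ↦ sum_le_sum (hterm d hd)
    _ = N * ((∑ d ∈ s, (d : ℝ)⁻¹) ^ 2 + ∑ d ∈ s, (d : ℝ)⁻¹) := by
        simp +contextual only [← mul_sum, sum_add_distrib, sum_ite_eq, if_true, sq, sum_mul_sum]

theorem sum_sq_card_filter_dvd_sub_sum_inv_le {s : Finset ℕ}
    (hs : (s : Set ℕ).Pairwise Nat.Coprime) (N : ℕ) :
    ∑ n ∈ Icc 1 N, (#{d ∈ s | d ∣ n} - ∑ d ∈ s, (d : ℝ)⁻¹) ^ 2 ≤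
      (N + 2 * #s) * ∑ d ∈ s, (d : ℝ)⁻¹ := by
  have hsecond := sum_sq_card_filter_dvd_le hs N
  have hfirst := mul_sum_inv_sub_card_le_sum_card_filter_dvd s N
  have hH : 0 ≤ ∑ d ∈ s, (d : ℝ)⁻¹ := by positivity
  set H := ∑ d ∈ s, (d : ℝ)⁻¹
  have hexpand : ∑ n ∈ Icc 1 N, ((#{d ∈ s | d ∣ n} : ℝ) - H) ^ 2 =
      ∑ n ∈ Icc 1 N, (#{d ∈ s | d ∣ n} : ℝ) ^ 2
        - 2 * H * ∑ n ∈ Icc 1 N, (#{d ∈ s | d ∣ n} : ℝ) + N * H ^ 2 := by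
    simp only [sub_sq, sum_add_distrib, sum_sub_distrib, mul_sum, sum_const, Nat.card_Icc,
      nsmul_eq_mul, add_tsub_cancel_right]
    simp only [mul_right_comm _ _ H]
  linarith [mul_le_mul_of_nonneg_left hfirst hH]

lemma filter_dvd_primesLE {n N : ℕ} (hn : n ≠ 0) (hnN : n ≤ N) :
    {p ∈ N.primesLE | p ∣ n} = n.primeFactors := by
  ext p
  simp only [mem_filter, Nat.mem_primesLE, Nat.mem_primeFactors]
  have := fun h : p ∣ n ↦ (Nat.le_of_dvd hn.bot_lt h).trans hnN
  tauto

theorem sum_sq_card_primeFactors_sub_sum_inv_le (N : ℕ) :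
    ∑ n ∈ Icc 1 N, (#n.primeFactors - ∑ p ∈ N.primesLE, (p : ℝ)⁻¹) ^ 2 ≤
      3 * N * ∑ p ∈ N.primesLE, (p : ℝ)⁻¹ := by
  have hcoprime : (N.primesLE : Set ℕ).Pairwise Nat.Coprime := fun p hp q hq ↦
    (Nat.coprime_primes (Nat.prime_of_mem_primesLE hp) (Nat.prime_of_mem_primesLE hq)).2
  have hcard : (#N.primesLE : ℝ) ≤ N := by
    rw [Nat.primesLE_eq_filter_Icc_one]
    exact mod_cast (card_filter_le _ _).trans_eq (by simp)
  calc ∑ n ∈ Icc 1 N, (#n.primeFactors - ∑ p ∈ N.primesLE, (p : ℝ)⁻¹) ^ 2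
      = ∑ n ∈ Icc 1 N, (#{p ∈ N.primesLE | p ∣ n} - ∑ p ∈ N.primesLE, (p : ℝ)⁻¹) ^ 2 :=
        sum_congr rfl fun n hn ↦ by
          obtain ⟨hn₁, hnN⟩ := mem_Icc.1 hn
          rw [filter_dvd_primesLE (by omega) hnN]
    _ ≤ (N + 2 * #N.primesLE) * ∑ p ∈ N.primesLE, (p : ℝ)⁻¹ :=
        sum_sq_card_filter_dvd_sub_sum_inv_le hcoprime N
    _ ≤ 3 * N * ∑ p ∈ N.primesLE, (p : ℝ)⁻¹ := by
        gcongr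
        linarith

/-! ### The second moment about `log log N` -/

lemma sum_sub_sq_le_two_mul {ι : Type*} (s : Finset ι) (f : ι → ℝ) (a b : ℝ) :
    ∑ i ∈ s, (f i - b) ^ 2 ≤ 2 * ∑ i ∈ s, (f i - a) ^ 2 + 2 * #s * (a - b) ^ 2 :=
  calc ∑ i ∈ s, (f i - b) ^ 2 ≤ ∑ i ∈ s, 2 * ((f i - a) ^ 2 + (a - b) ^ 2) :=
        sum_le_sum fun i _ ↦ by simpa using add_sq_le (a := f i - a) (b := a - b)
    _ = 2 * ∑ i ∈ s, (f i - a) ^ 2 + 2 * #s * (a - b) ^ 2 := by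
        rw [← mul_sum, sum_add_distrib, sum_const, nsmul_eq_mul]
        ring

lemma one_le_log_log {x : ℝ} (hx : 16 ≤ x) : 1 ≤ log (log x) := by
  have hlog : Real.exp 1 ≤ log x :=
    calc Real.exp 1 ≤ 4 * log 2 := by linarith [Real.exp_one_lt_d9, Real.log_two_gt_d9]
      _ = log (2 ^ 4) := by rw [Real.log_pow, Nat.cast_ofNat]
      _ ≤ log x := Real.log_le_log (by norm_num) (by linarith)
  exact (Real.le_log_iff_exp_le ((Real.exp_pos 1).trans_le hlog)).2 hlog

theorem omega_second_moment :
    ∃ C : ℝ, 0 < C ∧ ∀ N : ℕ, 16 ≤ N →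
      ∑ n ∈ Finset.Icc 1 N, ((n.primeFactors.card : ℝ) - Real.log (Real.log N)) ^ 2
        ≤ C * N * Real.log (Real.log N) := by
  obtain ⟨M, hM⟩ := exists_abs_sum_primesLE_inv_sub_log_log_le
  have hM₀ : 0 ≤ M := (abs_nonneg _).trans (hM 2 le_rfl)
  refine ⟨6 + 6 * M + 2 * M ^ 2, by positivity, fun N hN ↦ ?_⟩
  have hturan := sum_sq_card_primeFactors_sub_sum_inv_le N
  have hmertens := hM N (by omega)
  have hL : 1 ≤ log (log N) := one_le_log_log (mod_cast hN)
  set H := ∑ p ∈ N.primesLE, (p : ℝ)⁻¹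
  set L := log (log N)
  have hHL : H ≤ L + M := by linarith [le_abs_self (H - L)]
  calc ∑ n ∈ Icc 1 N, ((n.primeFactors.card : ℝ) - L) ^ 2
      ≤ 2 * ∑ n ∈ Icc 1 N, (n.primeFactors.card - H) ^ 2 + 2 * N * (H - L) ^ 2 := by
        simpa using sum_sub_sq_le_two_mul (Icc 1 N) (fun n ↦ (n.primeFactors.card : ℝ)) H L
    _ ≤ 2 * (3 * N * (L + M)) + 2 * N * M ^ 2 := by
        have hsq : (H - L) ^ 2 ≤ M ^ 2 := sq_le_sq' (abs_le.1 hmertens).1 (abs_le.1 hmertens).2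
        gcongr
        exact hturan.trans (by gcongr)
    _ = N * (6 * L + (6 * M + 2 * M ^ 2) * 1) := by ring
    _ ≤ N * (6 * L + (6 * M + 2 * M ^ 2) * L) := by gcongr
    _ = (6 + 6 * M + 2 * M ^ 2) * N * L := by ring
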